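/- arXiv:1503.05152 — 2 statements merged into one kernel-verified Lean document; each statement's English description precedes it below -/
import Mathlib

section
/- Let X be a positive random variable with E[X] = 1, E[X log X] < ∞ and E[X log X] > log 2. Then there exists a unique α ∈ (0,1) such that E[(X^α / E[X^α]) · log(X^α / E[X^α])] = log 2. -/
open MeasureTheory Real

lemma aux_bound {x a : ℝ} (hx : 0 < x) (ha : a ∈ Set.Icc (0:ℝ) 1) :
    |x ^ a * (a * Real.log x)| ≤ 1 + |x * Real.log x| := by
  obtain ⟨h0, h1⟩ := ha
  rcases le_total x 1 with h | h
  · have hy : 0 < x ^ a := Real.rpow_pos_of_pos hx a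
    have hy1 : x ^ a ≤ 1 := Real.rpow_le_one hx.le h h0
    have := Real.abs_log_mul_self_lt (x ^ a) hy hy1
    rw [Real.log_rpow hx, mul_comm] at this
    have h2 := abs_nonneg (x * Real.log x)
    linarith
  · have hl : 0 ≤ Real.log x := Real.log_nonneg h
    have hy : x ^ a ≤ x := by
      calc x ^ a ≤ x ^ (1:ℝ) := Real.rpow_le_rpow_of_exponent_le h h1
        _ = x := Real.rpow_one x
    have hy0 : 0 < x ^ a := Real.rpow_pos_of_pos hx a
    rw [abs_of_nonneg (by positivity), abs_of_nonneg (by positivity)]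
    have : x ^ a * (a * Real.log x) ≤ x * Real.log x := by
      apply mul_le_mul hy _ (by positivity) hx.le
      nlinarith
    linarith

lemma aux_bound' {x a : ℝ} (hx : 0 < x) (ha : a ∈ Set.Icc (0:ℝ) 1) :
    |x ^ a| ≤ 1 + x := by
  obtain ⟨h0, h1⟩ := ha
  rw [abs_of_pos (Real.rpow_pos_of_pos hx a)]
  rcases le_total x 1 with h | h
  · linarith [Real.rpow_le_one hx.le h h0]
  · have : x ^ a ≤ x ^ (1:ℝ) := Real.rpow_le_rpow_of_exponent_le h h1
    rw [Real.rpow_one] at this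
    linarith

lemma aux_gibbs {a b : ℝ} (ha : 0 < a) (hb : 0 < b) :
    0 ≤ a * (Real.log a - Real.log b) - a + b := by
  have h := Real.log_le_sub_one_of_pos (div_pos hb ha)
  rw [Real.log_div hb.ne' ha.ne'] at h
  have h2 := mul_le_mul_of_nonneg_left h ha.le
  have : a * (b / a - 1) = b - a := by field_simp
  nlinarith

lemma aux_gibbs_eq {a b : ℝ} (ha : 0 < a) (hb : 0 < b)
    (h0 : a * (Real.log a - Real.log b) - a + b = 0) : a = b := by
  by_contra hne
  have h1 : b / a ≠ 1 := by
    intro h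
    rw [div_eq_one_iff_eq ha.ne'] at h
    exact hne h.symm
  have h := Real.log_lt_sub_one_of_pos (div_pos hb ha) h1
  rw [Real.log_div hb.ne' ha.ne'] at h
  have h2 := mul_lt_mul_of_pos_left h ha
  have : a * (b / a - 1) = b - a := by field_simp
  nlinarith

theorem exists_unique_critical_exponent
    {Ω : Type*} [MeasurableSpace Ω] (P : Measure Ω) [IsProbabilityMeasure P]
    (X : Ω → ℝ) (hXmeas : Measurable X) (hXpos : ∀ ω, 0 < X ω)
    (hXmean : ∫ ω, X ω ∂P = 1)
    (hXlogint : Integrable (fun ω => X ω * Real.log (X ω)) P)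
    (hstrong : Real.log 2 < ∫ ω, X ω * Real.log (X ω) ∂P) :
    ∃! α : ℝ, α ∈ Set.Ioo (0 : ℝ) 1 ∧
      ∫ ω, (X ω ^ α / (∫ ω', X ω' ^ α ∂P)) *
          Real.log (X ω ^ α / (∫ ω', X ω' ^ α ∂P)) ∂P = Real.log 2 := by
  have hXint : Integrable X P := by
    by_contra h
    rw [integral_undef h] at hXmean
    exact zero_ne_one hXmean
  have hb1 : Integrable (fun ω => 1 + X ω) P := (integrable_const 1).add hXint
  have hb2 : Integrable (fun ω => 1 + |X ω * Real.log (X ω)|) P :=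
    (integrable_const 1).add hXlogint.abs
  have hm1 : ∀ a : ℝ, AEStronglyMeasurable (fun ω => X ω ^ a) P := fun a =>
    (hXmeas.pow_const a).aestronglyMeasurable
  have hm2 : ∀ a : ℝ, AEStronglyMeasurable (fun ω => X ω ^ a * (a * Real.log (X ω))) P := fun a =>
    ((hXmeas.pow_const a).mul ((hXmeas.log).const_mul a)).aestronglyMeasurable
  have hi1 : ∀ a ∈ Set.Icc (0:ℝ) 1, Integrable (fun ω => X ω ^ a) P := fun a ha =>
    hb1.mono' (hm1 a) (Filter.Eventually.of_forall fun ω => aux_bound' (hXpos ω) ha)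
  have hi2 : ∀ a ∈ Set.Icc (0:ℝ) 1, Integrable (fun ω => X ω ^ a * (a * Real.log (X ω))) P :=
    fun a ha =>
    hb2.mono' (hm2 a) (Filter.Eventually.of_forall fun ω => aux_bound (hXpos ω) ha)
  set M : ℝ → ℝ := fun a => ∫ ω, X ω ^ a ∂P with hM
  set G : ℝ → ℝ := fun a => ∫ ω, X ω ^ a * (a * Real.log (X ω)) ∂P with hG
  have hMc : ContinuousOn M (Set.Icc 0 1) := by
    apply continuousOn_of_dominated (bound := fun ω => 1 + X ω)
    · exact fun a _ => hm1 a
    · exact fun a ha => Filter.Eventually.of_forall fun ω => aux_bound' (hXpos ω) ha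
    · exact hb1
    · refine Filter.Eventually.of_forall fun ω => Continuous.continuousOn ?_
      exact Real.continuous_const_rpow (hXpos ω).ne'
  have hGc : ContinuousOn G (Set.Icc 0 1) := by
    apply continuousOn_of_dominated (bound := fun ω => 1 + |X ω * Real.log (X ω)|)
    · exact fun a _ => hm2 a
    · exact fun a ha => Filter.Eventually.of_forall fun ω => aux_bound (hXpos ω) ha
    · exact hb2
    · refine Filter.Eventually.of_forall fun ω => Continuous.continuousOn ?_
      exact (Real.continuous_const_rpow (hXpos ω).ne').mul (by fun_prop)
  have hMpos : ∀ a ∈ Set.Icc (0:ℝ) 1, 0 < M a := by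
    intro a ha
    refine (integral_pos_iff_support_of_nonneg
      (fun ω => (Real.rpow_pos_of_pos (hXpos ω) a).le) (hi1 a ha)).2 ?_
    have : Function.support (fun ω => X ω ^ a) = Set.univ := by
      ext ω
      simp [(Real.rpow_pos_of_pos (hXpos ω) a).ne']
    rw [this]
    simp
  have hlog : ∀ a ∈ Set.Icc (0:ℝ) 1, ∀ ω,
      Real.log (X ω ^ a / M a) = a * Real.log (X ω) - Real.log (M a) := by
    intro a ha ω
    rw [Real.log_div (Real.rpow_pos_of_pos (hXpos ω) a).ne' (hMpos a ha).ne',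
      Real.log_rpow (hXpos ω)]
  have hF : ∀ a ∈ Set.Icc (0:ℝ) 1, ∫ ω, (X ω ^ a / M a) * Real.log (X ω ^ a / M a) ∂P
      = G a / M a - Real.log (M a) := by
    intro a ha
    have h1 : ∀ ω, (X ω ^ a / M a) * Real.log (X ω ^ a / M a)
        = (M a)⁻¹ * (X ω ^ a * (a * Real.log (X ω))) - (Real.log (M a) / M a) * X ω ^ a := by
      intro ω
      rw [hlog a ha ω]; ring
    simp_rw [h1]
    rw [integral_sub ((hi2 a ha).const_mul _) ((hi1 a ha).const_mul _),
      integral_const_mul, integral_const_mul]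
    change (M a)⁻¹ * G a - Real.log (M a) / M a * M a = _
    have := (hMpos a ha).ne'
    field_simp
  have hFc : ContinuousOn (fun a => G a / M a - Real.log (M a)) (Set.Icc 0 1) :=
    (hGc.div hMc fun a ha => (hMpos a ha).ne').sub (hMc.log fun a ha => (hMpos a ha).ne')
  have hM0 : M 0 = 1 := by simp [hM]
  have hG0 : G 0 = 0 := by simp [hG]
  have hM1 : M 1 = 1 := by simp [hM, hXmean]
  have hG1 : G 1 = ∫ ω, X ω * Real.log (X ω) ∂P := by simp [hG]
  have hlog2 : 0 < Real.log 2 := Real.log_pos (by norm_num)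
  -- relative entropy
  have hD : ∀ a ∈ Set.Ioc (0:ℝ) 1, ∀ b ∈ Set.Ioc (0:ℝ) 1,
      Integrable (fun ω => (X ω ^ b / M b) * (Real.log (X ω ^ b / M b) - Real.log (X ω ^ a / M a))
        - X ω ^ b / M b + X ω ^ a / M a) P ∧
      ∫ ω, ((X ω ^ b / M b) * (Real.log (X ω ^ b / M b) - Real.log (X ω ^ a / M a))
        - X ω ^ b / M b + X ω ^ a / M a) ∂P
      = (b - a) * (G b / b / M b) - Real.log (M b) + Real.log (M a) := by
    intro a ha b hb
    have ha' : a ∈ Set.Icc (0:ℝ) 1 := ⟨ha.1.le, ha.2⟩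
    have hb' : b ∈ Set.Icc (0:ℝ) 1 := ⟨hb.1.le, hb.2⟩
    have hMa := (hMpos a ha').ne'
    have hMb := (hMpos b hb').ne'
    have hb0 := hb.1.ne'
    have h1 : ∀ ω, (X ω ^ b / M b) * (Real.log (X ω ^ b / M b) - Real.log (X ω ^ a / M a))
        - X ω ^ b / M b + X ω ^ a / M a
        = ((b - a) / b / M b) * (X ω ^ b * (b * Real.log (X ω)))
          + ((- Real.log (M b) + Real.log (M a) - 1) / M b) * X ω ^ b + (M a)⁻¹ * X ω ^ a := by
      intro ω
      rw [hlog a ha' ω, hlog b hb' ω]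
      field_simp
      ring
    simp_rw [h1]
    have i1 := (hi2 b hb').const_mul ((b - a) / b / M b)
    have i2 := (hi1 b hb').const_mul ((- Real.log (M b) + Real.log (M a) - 1) / M b)
    have i3 := (hi1 a ha').const_mul (M a)⁻¹
    refine ⟨(i1.add i2).add i3, ?_⟩
    rw [integral_add (by exact i1.add i2) i3, integral_add i1 i2,
      integral_const_mul, integral_const_mul, integral_const_mul]
    change (b - a) / b / M b * G b + (-Real.log (M b) + Real.log (M a) - 1) / M b * M b
      + (M a)⁻¹ * M a = _
    field_simp
    ring
  have hpp : ∀ a ∈ Set.Icc (0:ℝ) 1, ∀ ω, 0 < X ω ^ a / M a := fun a ha ω =>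
    div_pos (Real.rpow_pos_of_pos (hXpos ω) a) (hMpos a ha)
  have hDnn : ∀ a ∈ Set.Ioc (0:ℝ) 1, ∀ b ∈ Set.Ioc (0:ℝ) 1,
      0 ≤ (b - a) * (G b / b / M b) - Real.log (M b) + Real.log (M a) := by
    intro a ha b hb
    rw [← (hD a ha b hb).2]
    exact integral_nonneg fun ω => aux_gibbs (hpp b ⟨hb.1.le, hb.2⟩ ω) (hpp a ⟨ha.1.le, ha.2⟩ ω)
  have hDpos : ∀ a ∈ Set.Ioc (0:ℝ) 1, ∀ b ∈ Set.Ioc (0:ℝ) 1, a < b →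
      0 < (b - a) * (G b / b / M b) - Real.log (M b) + Real.log (M a) := by
    intro a ha b hb hab
    have ha' : a ∈ Set.Icc (0:ℝ) 1 := ⟨ha.1.le, ha.2⟩
    have hb' : b ∈ Set.Icc (0:ℝ) 1 := ⟨hb.1.le, hb.2⟩
    refine lt_of_le_of_ne (hDnn a ha b hb) fun h0 => ?_
    rw [← (hD a ha b hb).2] at h0
    have hz := (integral_eq_zero_iff_of_nonneg
      (fun ω => aux_gibbs (hpp b hb' ω) (hpp a ha' ω)) (hD a ha b hb).1).1 h0.symm
    -- log X is a.e. constant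
    set c := (Real.log (M b) - Real.log (M a)) / (b - a) with hc
    have hconst : ∀ᵐ ω ∂P, X ω = Real.exp c := by
      filter_upwards [hz] with ω hω
      have he := aux_gibbs_eq (hpp b hb' ω) (hpp a ha' ω) hω
      have he2 := congrArg Real.log he
      rw [hlog a ha' ω, hlog b hb' ω] at he2
      have : Real.log (X ω) = c := by
        rw [hc, eq_div_iff (sub_pos.2 hab).ne']
        linarith
      rw [← this, Real.exp_log (hXpos ω)]
    have hX1 : Real.exp c = 1 := by
      rw [← hXmean, integral_congr_ae hconst]; simp
    have : ∫ ω, X ω * Real.log (X ω) ∂P = 0 := by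
      rw [integral_congr_ae (g := fun _ => (0:ℝ))]
      · simp
      · filter_upwards [hconst] with ω hω
        simp [hω, hX1]
    linarith
  have hmono : ∀ a ∈ Set.Ioc (0:ℝ) 1, ∀ b ∈ Set.Ioc (0:ℝ) 1, a < b →
      G a / M a - Real.log (M a) < G b / M b - Real.log (M b) := by
    intro a ha b hb hab
    have h1 := hDpos a ha b hb hab
    have h2 := hDnn b hb a ha
    have e1 : G a / M a = a * (G a / a / M a) := by
      have := ha.1.ne'
      field_simp
    have e2 : G b / M b = b * (G b / b / M b) := by
      have := hb.1.ne'
      field_simp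
    rw [e1, e2]
    generalize G a / a / M a = u at *
    generalize G b / b / M b = v at *
    have h3 : 0 < (b - a) * (v - u) := by nlinarith
    have h4 : 0 < v - u := (mul_pos_iff_of_pos_left (sub_pos.2 hab)).1 h3
    have h5 := mul_pos ha.1 h4
    nlinarith
  obtain ⟨α, hα, hα2⟩ : Real.log 2 ∈ (fun a => G a / M a - Real.log (M a)) '' Set.Ioo 0 1 := by
    apply intermediate_value_Ioo zero_le_one hFc
    simp only [hM0, hM1, hG0, hG1]
    constructor <;> simp [hlog2, hstrong]
  refine ⟨α, ⟨hα, ?_⟩, ?_⟩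
  · exact (hF α ⟨hα.1.le, hα.2.le⟩).trans hα2
  · rintro β ⟨hβ, hβ2⟩
    have hβ3 := (hF β ⟨hβ.1.le, hβ.2.le⟩).symm.trans hβ2
    simp only at hα2
    rcases lt_trichotomy β α with h | h | h
    · have := hmono β ⟨hβ.1, hβ.2.le⟩ α ⟨hα.1, hα.2.le⟩ h
      linarith
    · exact h
    · have := hmono α ⟨hα.1, hα.2.le⟩ β ⟨hβ.1, hβ.2.le⟩ h
      linarith
end

section
/- Let X be a positive random variable with E[X] = 1, E[X log X] < ∞, and suppose X is not almost surely constant. Define f(α) = α·E[X^α log X]/E[X^α] − log E[X^α] for α ∈ [0,1]. Then f is continuous on [0,1] and strictly increasing on [0,1]. -/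
open MeasureTheory Real

lemma te_bound1 (x s : ℝ) (hx : 0 < x) (hs : s ∈ Set.Icc (0:ℝ) 1) : ‖x ^ s‖ ≤ 1 + x := by
  rw [Real.norm_of_nonneg (by positivity)]
  rcases le_total x 1 with h | h
  · have := Real.rpow_le_one hx.le h hs.1
    linarith
  · have := Real.rpow_le_rpow_of_exponent_le h hs.2
    rw [Real.rpow_one] at this
    linarith

lemma te_bound2 (x s : ℝ) (hx : 0 < x) (hs : s ∈ Set.Icc (0:ℝ) 1) :
    ‖s * (x ^ s * Real.log x)‖ ≤ 1 + |x * Real.log x| := by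
  rw [Real.norm_eq_abs]
  rcases le_total x 1 with h | h
  · rcases hs.1.eq_or_lt with h0 | h0
    · rw [← h0]; simp; positivity
    · have h1 := Real.abs_log_mul_self_lt (x ^ s) (by positivity) (Real.rpow_le_one hx.le h hs.1)
      rw [Real.log_rpow hx] at h1
      have : s * (x ^ s * Real.log x) = s * Real.log x * x ^ s := by ring
      rw [this]
      have := abs_nonneg (x * Real.log x)
      linarith
  · have h1 := Real.rpow_le_rpow_of_exponent_le h hs.2
    rw [Real.rpow_one] at h1
    have hl := Real.log_nonneg h
    have h0 : 0 ≤ x ^ s := by positivity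
    have hs0 := hs.1
    rw [abs_of_nonneg (by positivity), abs_of_nonneg (by positivity)]
    have h2 : x ^ s * Real.log x ≤ x * Real.log x := by gcongr
    have h3 : s * (x ^ s * Real.log x) ≤ 1 * (x ^ s * Real.log x) := by
      have := hs.2
      gcongr
    linarith

lemma te_gibbs {Ω : Type*} [MeasurableSpace Ω] (P : Measure Ω) [IsProbabilityMeasure P]
    (X : Ω → ℝ) (hXpos : ∀ ω, 0 < X ω)
    (hXnonconst : ¬ ∃ c : ℝ, ∀ᵐ ω ∂P, X ω = c) (s t : ℝ) (hst : s ≠ t)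
    (hs : Integrable (fun ω => X ω ^ s) P) (ht : Integrable (fun ω => X ω ^ t) P)
    (hM : Integrable (fun ω => X ω ^ s * Real.log (X ω)) P)
    (hZs : 0 < ∫ ω, X ω ^ s ∂P) (hZt : 0 < ∫ ω, X ω ^ t ∂P) :
    (t - s) * ((∫ ω, X ω ^ s * Real.log (X ω) ∂P) / (∫ ω, X ω ^ s ∂P))
      < Real.log (∫ ω, X ω ^ t ∂P) - Real.log (∫ ω, X ω ^ s ∂P) := by
  set Zs := ∫ ω, X ω ^ s ∂P with hZsd
  set Zt := ∫ ω, X ω ^ t ∂P with hZtd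
  set M := ∫ ω, X ω ^ s * Real.log (X ω) ∂P with hMd
  set c := Real.log Zs - Real.log Zt with hc
  have key : ∀ ω, Real.log (X ω ^ (t - s) * (Zs / Zt)) = (t - s) * Real.log (X ω) + c := by
    intro ω
    have := hXpos ω
    rw [Real.log_mul (by positivity) (by positivity), Real.log_rpow this,
      Real.log_div hZs.ne' hZt.ne']
  let g : Ω → ℝ := fun ω => ((Zs / Zt) * X ω ^ t - X ω ^ s)
    - ((t - s) * (X ω ^ s * Real.log (X ω)) + c * X ω ^ s)
  have hg : ∀ ω, g ω = X ω ^ s * (X ω ^ (t - s) * (Zs / Zt) - 1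
      - Real.log (X ω ^ (t - s) * (Zs / Zt))) := by
    intro ω
    have h : X ω ^ t = X ω ^ s * X ω ^ (t - s) := by
      rw [← Real.rpow_add (hXpos ω)]; congr 1; ring
    rw [key]
    simp only [g, h]
    ring
  have hg0 : ∀ ω, 0 ≤ g ω := by
    intro ω
    have := hXpos ω
    rw [hg]
    have h1 := Real.log_le_sub_one_of_pos (x := X ω ^ (t - s) * (Zs / Zt)) (by positivity)
    have : 0 ≤ X ω ^ s := by positivity
    exact mul_nonneg this (by linarith)
  have i1 := (ht.const_mul (Zs / Zt)).sub hs
  have i2 := (hM.const_mul (t - s)).add (hs.const_mul c)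
  have hgi : Integrable g P := i1.sub i2
  have hint : ∫ ω, g ω ∂P = - ((t - s) * M + c * Zs) := by
    have e : ∫ ω, g ω ∂P = (Zs / Zt * Zt - Zs) - ((t - s) * M + c * Zs) := by
      have e1 := integral_sub i1 i2
      have e2 := integral_sub (ht.const_mul (Zs / Zt)) hs
      have e3 := integral_add (hM.const_mul (t - s)) (hs.const_mul c)
      simp only [integral_const_mul] at e2 e3
      simp only [Pi.sub_apply, Pi.add_apply] at e1
      exact e1.trans (by rw [e2, e3])
    rw [e]; field_simp; ring
  have hpos : 0 < ∫ ω, g ω ∂P := by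
    refine lt_of_le_of_ne (integral_nonneg hg0) (fun h => hXnonconst ?_)
    have h2 := (integral_eq_zero_iff_of_nonneg hg0 hgi).1 h.symm
    refine ⟨(Zt / Zs) ^ (t - s)⁻¹, ?_⟩
    filter_upwards [h2] with ω hω
    have hx := hXpos ω
    have hts : t - s ≠ 0 := sub_ne_zero.2 hst.symm
    have hxs : 0 < X ω ^ s := by positivity
    simp only [Pi.zero_apply] at hω
    rw [hg] at hω
    have h3 := (mul_eq_zero.1 hω).resolve_left hxs.ne'
    have h4 : X ω ^ (t - s) * (Zs / Zt) = 1 := by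
      by_contra hne
      have := Real.log_lt_sub_one_of_pos (x := X ω ^ (t - s) * (Zs / Zt)) (by positivity) hne
      linarith
    have h5 : X ω ^ (t - s) = Zt / Zs := by
      field_simp at h4 ⊢
      linarith
    rw [← h5, Real.rpow_rpow_inv hx.le hts]
  rw [hint] at hpos
  have : (t - s) * (M / Zs) + c < 0 := by
    have e : (t - s) * (M / Zs) + c = ((t - s) * M + c * Zs) / Zs := by field_simp
    rw [e]
    exact div_neg_of_neg_of_pos (by linarith) hZs
  linarith

/-- For a positive random variable `X` with `E[X] = 1`,
`E[X log X] < ∞`, and `X` not almost surely constant, the function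
`f(α) = α·E[X^α log X]/E[X^α] − log E[X^α]` is continuous and strictly increasing
on `[0,1]`. -/
theorem tilted_entropy_continuous_strictMono
    {Ω : Type*} [MeasurableSpace Ω] (P : Measure Ω) [IsProbabilityMeasure P]
    (X : Ω → ℝ) (hXmeas : Measurable X) (hXpos : ∀ ω, 0 < X ω)
    (hXmean : ∫ ω, X ω ∂P = 1)
    (hXlogint : Integrable (fun ω => X ω * Real.log (X ω)) P)
    (hXnonconst : ¬ ∃ c : ℝ, ∀ᵐ ω ∂P, X ω = c)
    (f : ℝ → ℝ)
    (hf : ∀ α, f α = α * ((∫ ω, X ω ^ α * Real.log (X ω) ∂P) / (∫ ω, X ω ^ α ∂P))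
        - Real.log (∫ ω, X ω ^ α ∂P)) :
    ContinuousOn f (Set.Icc (0 : ℝ) 1) ∧ StrictMonoOn f (Set.Icc (0 : ℝ) 1) := by
  have hX : Integrable X P := by
    by_contra h
    rw [integral_undef h] at hXmean
    exact zero_ne_one hXmean
  have hB1 : Integrable (fun ω => 1 + X ω) P := (integrable_const 1).add hX
  have hB2 : Integrable (fun ω => 1 + |X ω * Real.log (X ω)|) P :=
    (integrable_const 1).add hXlogint.abs
  have m1 : ∀ s : ℝ, AEStronglyMeasurable (fun ω => X ω ^ s) P := fun s =>
    (hXmeas.pow_const s).aestronglyMeasurable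
  have m2 : ∀ s : ℝ, AEStronglyMeasurable (fun ω => s * (X ω ^ s * Real.log (X ω))) P := fun s =>
    (((hXmeas.pow_const s).mul hXmeas.log).const_mul s).aestronglyMeasurable
  have i1 : ∀ s ∈ Set.Icc (0:ℝ) 1, Integrable (fun ω => X ω ^ s) P := fun s hs =>
    hB1.mono' (m1 s) (Filter.Eventually.of_forall fun ω => te_bound1 _ _ (hXpos ω) hs)
  have i2 : ∀ s ∈ Set.Icc (0:ℝ) 1, Integrable (fun ω => s * (X ω ^ s * Real.log (X ω))) P :=
    fun s hs =>
    hB2.mono' (m2 s) (Filter.Eventually.of_forall fun ω => te_bound2 _ _ (hXpos ω) hs)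
  have i3 : ∀ s ∈ Set.Icc (0:ℝ) 1, 0 < s → Integrable (fun ω => X ω ^ s * Real.log (X ω)) P := by
    intro s hs h0
    have := (i2 s hs).const_mul s⁻¹
    refine this.congr (Filter.Eventually.of_forall fun ω => ?_)
    simp only
    field_simp
  have hZ : ∀ s ∈ Set.Icc (0:ℝ) 1, 0 < ∫ ω, X ω ^ s ∂P := by
    intro s hs
    rw [integral_pos_iff_support_of_nonneg (fun ω => (Real.rpow_pos_of_pos (hXpos ω) s).le) (i1 s hs)]
    have : Function.support (fun ω => X ω ^ s) = Set.univ := by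
      ext ω; simpa using (Real.rpow_pos_of_pos (hXpos ω) s).ne'
    rw [this]; simp
  constructor
  · have c1 : ContinuousOn (fun s => ∫ ω, X ω ^ s ∂P) (Set.Icc (0:ℝ) 1) := by
      refine continuousOn_of_dominated (bound := fun ω => 1 + X ω) (fun s _ => m1 s)
        (fun s hs => Filter.Eventually.of_forall fun ω => te_bound1 _ _ (hXpos ω) hs) hB1
        (Filter.Eventually.of_forall fun ω => ?_)
      exact (Real.continuous_const_rpow (hXpos ω).ne').continuousOn
    have c2 : ContinuousOn (fun s => ∫ ω, s * (X ω ^ s * Real.log (X ω)) ∂P)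
        (Set.Icc (0:ℝ) 1) := by
      refine continuousOn_of_dominated (bound := fun ω => 1 + |X ω * Real.log (X ω)|)
        (fun s _ => m2 s)
        (fun s hs => Filter.Eventually.of_forall fun ω => te_bound2 _ _ (hXpos ω) hs) hB2
        (Filter.Eventually.of_forall fun ω => ?_)
      exact (continuous_id.mul ((Real.continuous_const_rpow (hXpos ω).ne').mul
        continuous_const)).continuousOn
    have c3 := (c2.div c1 (fun s hs => (hZ s hs).ne')).sub (c1.log (fun s hs => (hZ s hs).ne'))
    refine c3.congr (fun s _ => ?_)
    simp only [Pi.sub_apply, Pi.div_apply, hf s, integral_const_mul]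
    ring
  · intro a ha b hb hab
    have hb0 : 0 < b := lt_of_le_of_lt ha.1 hab
    have g1 := te_gibbs P X hXpos hXnonconst b a hab.ne' (i1 b hb) (i1 a ha) (i3 b hb hb0)
      (hZ b hb) (hZ a ha)
    rw [hf a, hf b]
    rcases ha.1.eq_or_lt with h0 | h0
    · subst h0
      linarith
    · have g2 := te_gibbs P X hXpos hXnonconst a b hab.ne (i1 a ha) (i1 b hb) (i3 a ha h0)
        (hZ a ha) (hZ b hb)
      generalize (∫ ω, X ω ^ b * Real.log (X ω) ∂P) / (∫ ω, X ω ^ b ∂P) = mb at *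
      generalize (∫ ω, X ω ^ a * Real.log (X ω) ∂P) / (∫ ω, X ω ^ a ∂P) = ma at *
      have h1 : ma < mb := by
        have : (b - a) * ma < (b - a) * mb := by linarith
        exact lt_of_mul_lt_mul_left this (by linarith)
      have := mul_lt_mul_of_pos_left h1 h0
      linarith
end
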